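/- Let G be a finite group of odd order, let (ρ, V) be an irreducible complex representation of G that is not isomorphic to the trivial one-dimensional representation, and let χ(g) = tr(ρ(g)) be its character. Then the Frobenius–Schur indicator of ρ vanishes: (1/|G|) · Σ_{g ∈ G} χ(g²) = 0. -/

import Mathlib

open scoped BigOperators

/-!
Squaring permutes a group of odd order, so `∑ χ(g²) = ∑ χ(g)` is the trace of `∑ ρ(g)`. The image
of `∑ ρ(g)` consists of invariant vectors, and an irreducible representation with a nonzero
invariant vector is one-dimensional and trivial; hence `∑ ρ(g) = 0`.
-/

section Irreducible

variable {k G V : Type*} [Field k] [AddCommGroup V] [Module k V]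

theorem isIrreducible_of_forall_eq_bot_or_eq_top [Monoid G] [Nontrivial V]
    {ρ : Representation k G V}
    (h : ∀ p : Submodule k V, (∀ g, ∀ v ∈ p, ρ g v ∈ p) → p = ⊥ ∨ p = ⊤) :
    ρ.IsIrreducible where
  exists_pair_ne :=
    ⟨⊥, ⊤, fun hbt ↦ bot_ne_top (α := Submodule k V) (congrArg Subrepresentation.toSubmodule hbt)⟩
  eq_bot_or_eq_top W :=
    (h W.toSubmodule W.apply_mem_toSubmodule).imp
      (Subrepresentation.toSubmodule_injective ·) (Subrepresentation.toSubmodule_injective ·)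

theorem nonempty_equiv_trivial_of_invariants_ne_bot [Group G] {ρ : Representation k G V}
    [ρ.IsIrreducible] (h : ρ.invariants ≠ ⊥) :
    Nonempty (ρ.Equiv (Representation.trivial k G k)) := by
  obtain ⟨w, hw, hw0⟩ := Submodule.exists_mem_ne_zero_of_ne_bot h
  let f : (Representation.trivial k G k).IntertwiningMap ρ :=
    (LinearMap.toSpanSingleton k V w).intertwiningMap_of_isIntertwiningMap _ _
      fun g c ↦ by simp [hw g]
  have f_apply_one : f 1 = w := one_smul k w
  have f_injective : Function.Injective f := smul_left_injective k hw0
  have f_surjective : Function.Surjective f :=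
    (Representation.IsIrreducible.surjective_or_eq_zero f).resolve_right
      fun hf ↦ hw0 (f_apply_one.symm.trans (DFunLike.congr_fun hf 1))
  exact ⟨(f.ofBijective ⟨f_injective, f_surjective⟩).symm⟩

end Irreducible

section Sum

variable {k G V : Type*} [CommRing k] [Group G] [Fintype G] [AddCommGroup V] [Module k V]
  {ρ : Representation k G V}

theorem norm_eq_zero_of_invariants_eq_bot (h : ρ.invariants = ⊥) : ρ.norm = 0 := by
  ext v
  have norm_mem : ρ.norm v ∈ ρ.invariants := fun g ↦ ρ.self_norm_apply g v
  rwa [h, Submodule.mem_bot] at norm_mem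

theorem frobeniusSchur_indicator_eq_zero_of_odd_order_general [Module.Free k V] [Module.Finite k V]
    {n : ℕ} (hn : (Nat.card G).Coprime n) (h : ρ.invariants = ⊥) :
    ∑ g : G, LinearMap.trace k V (ρ (g ^ n)) = 0 :=
  calc
    ∑ g : G, LinearMap.trace k V (ρ (g ^ n)) = ∑ g : G, LinearMap.trace k V (ρ g) :=
      Equiv.sum_comp (powCoprime hn) fun g ↦ LinearMap.trace k V (ρ g)
    _ = LinearMap.trace k V ρ.norm := (map_sum _ _ _).symm
    _ = 0 := by rw [norm_eq_zero_of_invariants_eq_bot h, map_zero]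

end Sum

/-- The Frobenius–Schur indicator of a nontrivial irreducible complex
representation of a finite group of odd order vanishes. -/
theorem frobeniusSchur_indicator_eq_zero_of_odd_order
    {G : Type*} [Group G] [Fintype G] (hG : Odd (Fintype.card G))
    {V : Type*} [AddCommGroup V] [Module ℂ V] [FiniteDimensional ℂ V] [Nontrivial V]
    (ρ : Representation ℂ G V)
    (hirr : ∀ p : Submodule ℂ V, (∀ (g : G), ∀ v ∈ p, ρ g v ∈ p) → p = ⊥ ∨ p = ⊤)
    (hnontriv : ¬ ∃ e : V ≃ₗ[ℂ] ℂ, ∀ (g : G) (v : V), e (ρ g v) = e v) :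
    (1 / (Fintype.card G : ℂ)) * ∑ g : G, LinearMap.trace ℂ V (ρ (g ^ 2)) = 0 := by
  have : ρ.IsIrreducible := isIrreducible_of_forall_eq_bot_or_eq_top hirr
  have hcop : (Nat.card G).Coprime 2 := by
    rwa [Nat.card_eq_fintype_card, Nat.coprime_two_right]
  have hinv : ρ.invariants = ⊥ := by
    by_contra h
    obtain ⟨e⟩ := nonempty_equiv_trivial_of_invariants_ne_bot h
    exact hnontriv ⟨e.toLinearEquiv, e.isIntertwining⟩
  rw [frobeniusSchur_indicator_eq_zero_of_odd_order_general hcop hinv, mul_zero]
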